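/- The semi-Thue system R over Σ = A ∪ Ā with rules a b̄ → b̄ a for a ≠ b, a b b̄ → a b̄ b, and a ā b̄ → ā a b̄ (for a, b ∈ A) is confluent. -/

import Mathlib

/-- A basic queue action: write a letter or read a letter. -/
inductive Act (A : Type) : Type
  | wr (a : A)
  | rd (a : A)
deriving DecidableEq

variable {A : Type} [DecidableEq A]

/-- The action of words over `Act A` on queue states `A* ∪ {⊥}` (⊥ = `none`). -/
def act : Option (List A) → List (Act A) → Option (List A)
  | q, [] => q
  | none, _ :: _ => none
  | some q, (Act.wr a) :: u => act (some (q ++ [a])) u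
  | some q, (Act.rd a) :: u =>
    match q with
    | [] => none
    | b :: q' => if b = a then act (some q') u else none

/-- Two words over `Act A` are equivalent if they act identically on all queues. -/
def qequiv (u v : List (Act A)) : Prop := ∀ q : List A, act (some q) u = act (some q) v

/-- Writing the word `w`. -/
def W (w : List A) : List (Act A) := w.map Act.wr

/-- Reading the word `w` (the barred copy of `w`). -/
def R (w : List A) : List (Act A) := w.map Act.rd

/-- `shuffle s` is the word `s₁ s̄₁ s₂ s̄₂ … sₖ s̄ₖ`. -/
def shuffle (s : List A) : List (Act A) := s.flatMap fun a => [Act.wr a, Act.rd a]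

/-- The projection to write letters. -/
def prW (w : List (Act A)) : List A :=
  w.filterMap fun x => match x with | Act.wr a => some a | Act.rd _ => none

/-- The projection to read letters (with the bars removed). -/
def prR (w : List (Act A)) : List A :=
  w.filterMap fun x => match x with | Act.wr _ => none | Act.rd a => some a

theorem act_append (u v : List (Act A)) : ∀ q, act q (u ++ v) = act (act q u) v := by
  induction u with
  | nil =>
      intro q
      cases q <;> rfl
  | cons x u ih =>
      intro q
      cases q with
      | none =>
          simp only [List.cons_append, act]
          cases v with
          | nil => rfl
          | cons _ _ => rfl
      | some q =>
          cases x with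
          | wr a => simpa [act] using ih _
          | rd a =>
              cases q with
              | nil =>
                  simp only [List.cons_append, act]
                  cases v with
                  | nil => rfl
                  | cons _ _ => rfl
              | cons b q' =>
                  by_cases h : b = a
                  · simp [List.cons_append, act, h, ih]
                  · simp only [List.cons_append, act, if_neg h]
                    cases v with
                    | nil => rfl
                    | cons _ _ => rfl

/-- The setoid of queue-action equivalence. -/
def qsetoid (A : Type) [DecidableEq A] : Setoid (List (Act A)) :=
  ⟨qequiv, ⟨fun _ _ => rfl, fun h q => (h q).symm, fun h1 h2 q => (h1 q).trans (h2 q)⟩⟩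

/-- The monoid of queue actions. -/
def QAct (A : Type) [DecidableEq A] : Type := Quotient (qsetoid A)

theorem act_none : ∀ v : List (Act A), act (none : Option (List A)) v = none
  | [] => rfl
  | _ :: _ => rfl

theorem qequiv_append {u u' v v' : List (Act A)} (hu : qequiv u u') (hv : qequiv v v') :
    qequiv (u ++ v) (u' ++ v') := by
  intro q
  rw [act_append, act_append, hu q]
  cases h : act (some q) u' with
  | none => rw [act_none, act_none]
  | some q' => exact hv q'

instance : Monoid (QAct A) where
  mul := Quotient.map₂ (· ++ ·) (fun _ _ hu _ _ hv => qequiv_append hu hv)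
  one := Quotient.mk (qsetoid A) []
  mul_assoc := by
    rintro ⟨u⟩ ⟨v⟩ ⟨w⟩
    exact congrArg (Quotient.mk (qsetoid A)) (List.append_assoc u v w)
  one_mul := by
    rintro ⟨u⟩
    rfl
  mul_one := by
    rintro ⟨u⟩
    exact congrArg (Quotient.mk (qsetoid A)) (List.append_nil u)

/-- The class of a word in the monoid of queue actions. -/
def cls (w : List (Act A)) : QAct A := Quotient.mk (qsetoid A) w

theorem cls_mul (u v : List (Act A)) : cls u * cls v = cls (u ++ v) := rfl

/-- The rules of the semi-Thue system `R`. -/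
inductive Rule : List (Act A) → List (Act A) → Prop
  | comm (a b : A) (h : a ≠ b) : Rule [Act.wr a, Act.rd b] [Act.rd b, Act.wr a]
  | wwr (a b : A) : Rule [Act.wr a, Act.wr b, Act.rd b] [Act.wr a, Act.rd b, Act.wr b]
  | wrr (a b : A) : Rule [Act.wr a, Act.rd a, Act.rd b] [Act.rd a, Act.wr a, Act.rd b]

/-- One rewriting step of the semi-Thue system `R`. -/
def Step (u v : List (Act A)) : Prop :=
  ∃ (l r x y : List (Act A)), Rule x y ∧ u = l ++ x ++ r ∧ v = l ++ y ++ r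

/-- Condition under which the factor `a b̄` may be swapped between the contexts `l` and `r`. -/
def Swappable (l : List (Act A)) (a b : A) (r : List (Act A)) : Prop :=
  a ≠ b ∨ (∃ l' c, l = l' ++ [Act.wr c]) ∨ (∃ r' c, r = Act.rd c :: r')

theorem step_of_swappable {l r : List (Act A)} {a b : A} (h : Swappable l a b r) :
    Step (l ++ Act.wr a :: Act.rd b :: r) (l ++ Act.rd b :: Act.wr a :: r) := by
  by_cases hab : a = b
  · subst hab
    rcases h with h | ⟨l', c, rfl⟩ | ⟨r', c, rfl⟩
    · exact absurd rfl h
    · exact ⟨l', r, _, _, Rule.wwr c a, by simp, by simp⟩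
    · exact ⟨l, r', _, _, Rule.wrr a c, by simp, by simp⟩
  · exact ⟨l, r, _, _, Rule.comm a b hab, by simp, by simp⟩

theorem exists_swappable_of_step {u v : List (Act A)} (h : Step u v) :
    ∃ l a b r, Swappable l a b r ∧ u = l ++ Act.wr a :: Act.rd b :: r ∧
      v = l ++ Act.rd b :: Act.wr a :: r := by
  obtain ⟨l, r, x, y, hxy, rfl, rfl⟩ := h
  cases hxy with
  | comm a b h => exact ⟨l, a, b, r, Or.inl h, by simp, by simp⟩
  | wwr a b =>
    exact ⟨l ++ [Act.wr a], b, b, r, Or.inr (Or.inl ⟨l, a, rfl⟩), by simp, by simp⟩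
  | wrr a b =>
    exact ⟨l, a, a, Act.rd b :: r, Or.inr (Or.inr ⟨r, b, rfl⟩), by simp, by simp⟩

/-- Swapping a factor to the left keeps a factor to its right swappable. -/
theorem Swappable.swap_left {l m r : List (Act A)} {a b c d : A}
    (h : Swappable (l ++ Act.wr a :: Act.rd b :: m) c d r) :
    Swappable (l ++ Act.rd b :: Act.wr a :: m) c d r := by
  rcases h with h | ⟨l', e, h⟩ | h
  · exact Or.inl h
  · refine Or.inr (Or.inl ?_)
    rcases List.eq_nil_or_concat m with rfl | ⟨m', x, rfl⟩
    · exact ⟨l ++ [Act.rd b], a, by simp⟩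
    · have h' : (l ++ Act.wr a :: Act.rd b :: m') ++ [x] = l' ++ [Act.wr e] := by
        simpa using h
      obtain ⟨-, hx⟩ := List.append_inj' h' rfl
      exact ⟨l ++ Act.rd b :: Act.wr a :: m', e, by simpa using hx⟩
  · exact Or.inr (Or.inr h)

/-- Swapping a factor to the right keeps a factor to its left swappable. -/
theorem Swappable.swap_right {l m r : List (Act A)} {a b c d : A}
    (h : Swappable l a b (m ++ Act.wr c :: Act.rd d :: r)) :
    Swappable l a b (m ++ Act.rd d :: Act.wr c :: r) := by
  rcases h with h | h | ⟨r', e, h⟩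
  · exact Or.inl h
  · exact Or.inr (Or.inl h)
  · refine Or.inr (Or.inr ?_)
    cases m with
    | nil => exact ⟨_, d, rfl⟩
    | cons x m =>
      obtain ⟨rfl, -⟩ := List.cons.inj h
      exact ⟨_, e, rfl⟩

theorem step_diamond_of_append {l m r s : List (Act A)} {a b c d : A}
    (h₁ : Swappable l a b r) (h₂ : Swappable (l ++ m) c d s)
    (h : Act.wr a :: Act.rd b :: r = m ++ Act.wr c :: Act.rd d :: s) :
    ∃ w, Relation.ReflGen Step (l ++ Act.rd b :: Act.wr a :: r) w ∧
      Relation.ReflGen Step (l ++ m ++ Act.rd d :: Act.wr c :: s) w := by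
  match m with
  | [] =>
    simp only [List.nil_append, List.cons.injEq, Act.wr.injEq, Act.rd.injEq] at h
    obtain ⟨rfl, rfl, rfl⟩ := h
    exact ⟨_, .refl, by simpa using .refl⟩
  | [x] => simp at h
  | x :: y :: m =>
    simp only [List.cons_append, List.cons.injEq] at h
    obtain ⟨rfl, rfl, rfl⟩ := h
    refine ⟨l ++ Act.rd b :: Act.wr a :: (m ++ Act.rd d :: Act.wr c :: s), ?_, ?_⟩
    · simpa using Relation.ReflGen.single (step_of_swappable h₂.swap_left)
    · simpa using Relation.ReflGen.single (step_of_swappable h₁.swap_right)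

theorem step_diamond {u v w : List (Act A)} (hv : Step u v) (hw : Step u w) :
    ∃ z, Relation.ReflGen Step v z ∧ Relation.ReflGen Step w z := by
  obtain ⟨l₁, a, b, r₁, h₁, rfl, rfl⟩ := exists_swappable_of_step hv
  obtain ⟨l₂, c, d, r₂, h₂, h, rfl⟩ := exists_swappable_of_step hw
  rcases List.append_eq_append_iff.mp h with ⟨m, rfl, hm⟩ | ⟨m, rfl, hm⟩
  · exact step_diamond_of_append h₁ h₂ hm
  · obtain ⟨z, hz₁, hz₂⟩ := step_diamond_of_append h₂ h₁ hm
    exact ⟨z, hz₂, hz₁⟩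

/-- The semi-Thue system `R` is confluent. -/
theorem stmt5 [Fintype A] :
    ∀ w w₁ w₂ : List (Act A),
      Relation.ReflTransGen Step w w₁ → Relation.ReflTransGen Step w w₂ →
      ∃ w₃, Relation.ReflTransGen Step w₁ w₃ ∧ Relation.ReflTransGen Step w₂ w₃ := by
  intro w w₁ w₂ h₁ h₂
  refine Relation.church_rosser (fun u v v' hv hv' => ?_) h₁ h₂
  obtain ⟨z, hz, hz'⟩ := step_diamond hv hv'
  exact ⟨z, hz, hz'.to_reflTransGen⟩
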